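/- In the Vaisman Lie algebra g = ℝA ⋉ h_{2n-1} of the previous setup (brackets [e_{2i-1},e_{2i}]=B, [A,e_{2i-1}]=a_i e_{2i}, [A,e_{2i}]=-a_i e_{2i-1}, complex structure JA=B, Je_{2i-1}=e_{2i}), the canonical generator η = μ ∧ ω₁ ∧ ⋯ ∧ ω_{n-1} of Λ^{(n,0)}g*, where μ = α + iβ and ω_j = e^{2j-1} + ie^{2j}, is closed (dη = 0) if and only if a₁ + a₂ + ⋯ + a_{n-1} = 0. -/

import Mathlib

/-- Remove the entries at two positions `i < j` from a tuple of length `m+2`. -/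
def removeTwo {α : Type*} {m : ℕ} (v : Fin (m + 2) → α) (i j : Fin (m + 2))
    (hij : i < j) : Fin m → α :=
  fun k =>
    v (j.succAbove ((Fin.mk i.1 (by
      have h1 := j.isLt
      have h2 : i.1 < j.1 := hij
      omega) : Fin (m + 1)).succAbove k))

/-- The Chevalley–Eilenberg differential of a complex-valued `(m+1)`-form `η`
on a Lie algebra:
`dη(v₀,…,v_{m+1}) = ∑_{i<j} (-1)^{i+j} η([vᵢ,vⱼ], v₀,…,v̂ᵢ,…,v̂ⱼ,…)`. -/
noncomputable def ceDiff {g : Type*} [LieRing g] {m : ℕ} (η : (Fin (m + 1) → g) → ℂ)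
    (v : Fin (m + 2) → g) : ℂ :=
  ∑ i : Fin (m + 2), ∑ j : Fin (m + 2),
    if hij : i < j then
      (-1 : ℂ) ^ (i.1 + j.1) * η (Fin.cons ⁅v i, v j⁆ (removeTwo v i j hij))
    else 0

/-- The wedge `μ ∧ ω₁ ∧ ⋯ ∧ ω_m` of the `(1,0)`-forms `μ = α + iβ` and
`ωⱼ = e^{2j-1} + i e^{2j}`, evaluated via the determinant formula for wedges
of 1-forms. -/
noncomputable def etaForm {g : Type*} [AddCommGroup g] [Module ℝ g] {m : ℕ}
    (α β : g →ₗ[ℝ] ℝ) (φf φw : Fin m → g →ₗ[ℝ] ℝ)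
    (v : Fin (m + 1) → g) : ℂ :=
  Matrix.det (Matrix.of fun i l : Fin (m + 1) =>
    Fin.cases ((α (v l) : ℂ) + Complex.I * (β (v l) : ℂ))
      (fun j => (φf j (v l) : ℂ) + Complex.I * (φw j (v l) : ℂ)) i)


theorem aux_trace {N : ℕ} (U M : Matrix (Fin N) (Fin N) ℂ) :
    ∑ i, (U.updateCol i (M.mulVec (U.col i))).det = M.trace * U.det := by
  have h : ∀ i, (U.updateCol i (M.mulVec (U.col i))).det = (U.adjugate * (M * U)) i i := by
    intro i
    rw [← Matrix.cramer_apply, Matrix.cramer_eq_adjugate_mulVec, Matrix.mul_apply]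
    rfl
  simp only [h]
  change (U.adjugate * (M * U)).trace = _
  rw [Matrix.trace_mul_comm, Matrix.mul_assoc, Matrix.mul_adjugate]
  simp [mul_comm]

theorem aux_cons {m : ℕ} (U : Fin (m + 1) → Fin (m + 1) → ℂ) (p : Fin (m + 1))
    (x : Fin (m + 1) → ℂ) :
    Matrix.det (Matrix.of fun i l : Fin (m + 1) =>
      (Fin.cons x (fun k => U (p.succAbove k)) : Fin (m + 1) → Fin (m + 1) → ℂ) l i) =
    (-1) ^ p.1 * ((Matrix.of fun i l => U l i).updateCol p x).det := by
  rw [Matrix.det_succ_column _ 0, Matrix.det_succ_column _ p, Finset.mul_sum]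
  refine Finset.sum_congr rfl fun r _ => ?_
  have : ((Matrix.of fun i l => U l i).updateCol p x).submatrix r.succAbove p.succAbove =
    (Matrix.of fun i l : Fin (m + 1) =>
      (Fin.cons x (fun k => U (p.succAbove k)) : Fin (m + 1) → Fin (m + 1) → ℂ) l i).submatrix
        r.succAbove (Fin.succAbove 0) := by
    ext s t
    simp [Matrix.updateCol_apply, Fin.succAbove_ne]
  rw [this]
  have h2 : (-1 : ℂ) ^ p.1 * (-1) ^ p.1 = 1 := by
    rw [← mul_pow]; simp
  simp only [Matrix.of_apply, Fin.cons_zero, Matrix.updateCol_self, pow_add, Fin.val_zero, pow_zero]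
  generalize Matrix.det (n := Fin m) (R := ℂ) _ = d
  linear_combination (-(-1 : ℂ) ^ r.1 * x r * d) * h2

/-- Main algebraic identity. -/
theorem aux_main {g : Type*} [LieRing g] {m : ℕ} (θ : g → Fin (m + 1) → ℂ)
    (R : g → Matrix (Fin (m + 1)) (Fin (m + 1)) ℂ)
    (hθ : ∀ x y, θ ⁅x, y⁆ = (R y).mulVec (θ x) - (R x).mulVec (θ y))
    (v : Fin (m + 2) → g) :
    ceDiff (fun u => Matrix.det (Matrix.of fun i l => θ (u l) i)) v =
    ∑ j : Fin (m + 2), (-1) ^ j.1 * ((R (v j)).trace *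
      Matrix.det (Matrix.of fun i l => θ (v (j.succAbove l)) i)) := by
  -- D j p : column p of the matrix with j omitted is acted on by R (v j)
  let D : Fin (m + 2) → Fin (m + 1) → ℂ := fun j p =>
    ((Matrix.of fun i l => θ (v (j.succAbove l)) i).updateCol p
      ((R (v j)).mulVec (θ (v (j.succAbove p))))).det
  have hD : ∀ j, (R (v j)).trace * Matrix.det (Matrix.of fun i l => θ (v (j.succAbove l)) i)
      = ∑ p, D j p := by
    intro j
    rw [← aux_trace]
    rfl
  -- E i j rest
  let P : Fin (m + 2) → Fin (m + 2) → ℂ := fun i j =>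
    if hij : i < j then (-1 : ℂ) ^ j.1 * D j ⟨i.1, by have := j.isLt; have : i.1 < j.1 := hij; omega⟩ else 0
  let Q : Fin (m + 2) → Fin (m + 2) → ℂ := fun i j =>
    if hij : i < j then (-1 : ℂ) ^ i.1 * D i ⟨j.1 - 1, by have := j.isLt; have : i.1 < j.1 := hij; omega⟩ else 0
  have hPQ : ceDiff (fun u => Matrix.det (Matrix.of fun i l => θ (u l) i)) v =
      ∑ i, ∑ j, (P i j + Q i j) := by
    unfold ceDiff
    refine Finset.sum_congr rfl fun i _ => Finset.sum_congr rfl fun j _ => ?_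
    by_cases hij : i < j
    swap
    · simp [P, Q, hij]
    have hij' : i.1 < j.1 := hij
    have hj := j.isLt
    simp only [P, Q, hij, dif_pos]
    set p : Fin (m + 1) := ⟨i.1, by omega⟩ with hp
    set q : Fin (m + 1) := ⟨j.1 - 1, by omega⟩ with hq
    have hjp : j.succAbove p = i := by
      simp only [Fin.succAbove, hp, Fin.lt_def, Fin.ext_iff]; split_ifs <;> simp_all
    have hiq : i.succAbove q = j := by
      simp only [Fin.succAbove, hq, Fin.lt_def, Fin.ext_iff]; split_ifs <;> simp_all <;> omega
    have hr1 : removeTwo v i j hij = fun k => v (j.succAbove (p.succAbove k)) := rfl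
    have hr2 : removeTwo v i j hij = fun k => v (i.succAbove (q.succAbove k)) := by
      rw [hr1]; funext k; congr 1
      ext
      simp only [Fin.succAbove, hp, hq, Fin.lt_def]
      split_ifs <;> simp_all <;> omega
    have key : ∀ (x : Fin (m + 1) → ℂ) (r : Fin m → g) (y : g), θ y = x →
        Matrix.det (Matrix.of fun i l => θ ((Fin.cons y r : Fin (m + 1) → g) l) i) =
        Matrix.det (Matrix.of fun i l => (Fin.cons x (fun k => θ (r k)) : Fin (m + 1) → Fin (m + 1) → ℂ) l i) := by
      intro x r y h
      congr 1; ext s t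
      refine Fin.cases ?_ (fun t => ?_) t <;> simp [h]
    rw [key _ _ _ (hθ (v i) (v j))]
    have lin : ∀ (x y : Fin (m + 1) → ℂ) (r : Fin m → Fin (m + 1) → ℂ),
        Matrix.det (Matrix.of fun i l => (Fin.cons (x - y) r : Fin (m + 1) → Fin (m + 1) → ℂ) l i) =
        Matrix.det (Matrix.of fun i l => (Fin.cons x r : Fin (m + 1) → Fin (m + 1) → ℂ) l i) -
        Matrix.det (Matrix.of fun i l => (Fin.cons y r : Fin (m + 1) → Fin (m + 1) → ℂ) l i) := by
      intro x y r
      simp only [Matrix.det_succ_column _ 0]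
      rw [← Finset.sum_sub_distrib]
      refine Finset.sum_congr rfl fun s _ => ?_
      have e : ∀ z : Fin (m + 1) → ℂ, (Matrix.of fun i l => (Fin.cons z r : Fin (m + 1) → Fin (m + 1) → ℂ) l i).submatrix s.succAbove (Fin.succAbove 0) = Matrix.of fun i l => r l (s.succAbove i) := by
        intro z; ext; simp
      rw [e, e, e]
      simp only [Matrix.of_apply, Fin.cons_zero, Pi.sub_apply]
      ring
    rw [lin]
    have h1 := aux_cons (fun l => θ (v (j.succAbove l))) p ((R (v j)).mulVec (θ (v i)))
    have h2 := aux_cons (fun l => θ (v (i.succAbove l))) q ((R (v i)).mulVec (θ (v j)))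
    have e1 : D j p = ((Matrix.of fun s l => θ (v (j.succAbove l)) s).updateCol p
      ((R (v j)).mulVec (θ (v i)))).det := by simp only [D, hjp]
    have e2 : D i q = ((Matrix.of fun s l => θ (v (i.succAbove l)) s).updateCol q
      ((R (v i)).mulVec (θ (v j)))).det := by simp only [D, hiq]
    rw [← e1] at h1
    rw [← e2] at h2
    have h1' : Matrix.det (Matrix.of fun s l => (Fin.cons ((R (v j)).mulVec (θ (v i))) (fun k => θ (removeTwo v i j hij k)) : Fin (m + 1) → Fin (m + 1) → ℂ) l s) = (-1) ^ p.1 * D j p := by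
      rw [hr1]; exact h1
    have h2' : Matrix.det (Matrix.of fun s l => (Fin.cons ((R (v i)).mulVec (θ (v j))) (fun k => θ (removeTwo v i j hij k)) : Fin (m + 1) → Fin (m + 1) → ℂ) l s) = (-1) ^ q.1 * D i q := by
      rw [hr2]; exact h2
    rw [h1', h2']
    have s1 : (-1 : ℂ) ^ i.1 * (-1) ^ p.1 = 1 := by rw [← mul_pow]; simp
    have s2 : (-1 : ℂ) ^ j.1 = - (-1) ^ q.1 := by
      have : j.1 = q.1 + 1 := by simp only [hq]; omega
      rw [this, pow_succ]; ring
    have s3 : (-1 : ℂ) ^ q.1 * (-1) ^ q.1 = 1 := by rw [← mul_pow]; simp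
    rw [pow_add]
    have : (-1 : ℂ) ^ i.1 * (-1) ^ j.1 * ((-1) ^ p.1 * D j p - (-1) ^ q.1 * D i q) =
      (-1 : ℂ) ^ j.1 * D j p * ((-1 : ℂ) ^ i.1 * (-1) ^ p.1) - (-1 : ℂ) ^ i.1 * D i q * ((-1) ^ j.1 * (-1) ^ q.1) := by ring
    rw [this, s1]
    rw [show (-1 : ℂ) ^ j.1 * (-1) ^ q.1 = -1 by rw [s2, neg_mul, s3]]
    ring
  rw [hPQ]
  have hsw : ∑ i, ∑ j, (P i j + Q i j) = ∑ j, ∑ i, (P i j + Q j i) := by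
    simp only [Finset.sum_add_distrib]
    rw [Finset.sum_comm (f := fun i j => P i j)]
  rw [hsw]
  refine Finset.sum_congr rfl fun j _ => ?_
  rw [hD, Fin.sum_univ_succAbove _ j, Finset.mul_sum]
  have : P j j + Q j j = 0 := by simp [P, Q]
  rw [this, zero_add]
  refine Finset.sum_congr rfl fun p _ => ?_
  by_cases h : p.1 < j.1
  · have hs : (j.succAbove p).1 = p.1 := by
      simp only [Fin.succAbove, Fin.lt_def]; split_ifs <;> simp_all
    have h1 : j.succAbove p < j := by rw [Fin.lt_def, hs]; exact h
    simp only [P, Q, h1, dif_pos, not_lt_of_gt h1, dif_neg, not_false_eq_true, add_zero, hs]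
  · have hs : (j.succAbove p).1 = p.1 + 1 := by
      rw [Fin.succAbove_of_le_castSucc _ _ (by rw [Fin.le_def, Fin.val_castSucc]; omega)]; simp
    have h1 : j < j.succAbove p := by rw [Fin.lt_def, hs]; omega
    simp only [P, Q, h1, dif_pos, not_lt_of_gt h1, dif_neg, not_false_eq_true, zero_add, hs,
      Nat.add_sub_cancel]

theorem aux_bil {g : Type*} [AddCommGroup g] [Module ℝ g] (S : Set g)
    (hS : Submodule.span ℝ S = ⊤) (K : g → g → ℝ)
    (anti : ∀ x y, K x y = - K y x)
    (hadd : ∀ x x' y, K (x + x') y = K x y + K x' y)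
    (hsmul : ∀ (c : ℝ) x y, K (c • x) y = c * K x y)
    (h : ∀ x ∈ S, ∀ y ∈ S, K x y = 0) (x y : g) : K x y = 0 := by
  have z : ∀ y, K 0 y = 0 := by intro y; simpa using hsmul 0 0 y
  have step : ∀ y, (∀ x ∈ S, K x y = 0) → ∀ x, K x y = 0 := by
    intro y hy x
    have hx : x ∈ Submodule.span ℝ S := by rw [hS]; trivial
    induction hx using Submodule.span_induction with
    | mem x hx => exact hy x hx
    | zero => exact z y
    | add a b _ _ ha hb => rw [hadd, ha, hb, add_zero]
    | smul c a _ ha => rw [hsmul, ha, mul_zero]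
  refine step y (fun x hx => ?_) x
  rw [anti, step x (fun y hy => h y hy x hx) y, neg_zero]

set_option maxHeartbeats 2000000 in
/-- In the Vaisman Lie algebra `g = ℝA ⋉ h_{2n-1}` (with `m = n - 1`, basis
`{A, B, f₁, w₁, …, f_m, w_m}`, brackets `[fᵢ, wᵢ] = B`, `[A, fᵢ] = aᵢ wᵢ`,
`[A, wᵢ] = -aᵢ fᵢ`, complex structure `JA = B`, `Jfᵢ = wᵢ`), the canonical
generator `η = μ ∧ ω₁ ∧ ⋯ ∧ ω_m` of `Λ^{(n,0)}g*`, where `μ = α + iβ` and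
`ωⱼ = f^j + i w^j`, is closed if and only if `a₁ + ⋯ + a_m = 0`. -/
theorem canonical_form_closed_iff {g : Type*} [LieRing g] [LieAlgebra ℝ g]
    (m : ℕ)
    (A B : g) (f w : Fin m → g) (a : Fin m → ℝ)
    (hindep : LinearIndependent ℝ (Sum.elim ![A, B] (Sum.elim f w)))
    (hspan : Submodule.span ℝ (Set.range (Sum.elim ![A, B] (Sum.elim f w))) = ⊤)
    -- Lie brackets
    (b1 : ∀ i j, ⁅f i, w j⁆ = if i = j then B else 0)
    (b2 : ∀ i j, ⁅f i, f j⁆ = 0) (b3 : ∀ i j, ⁅w i, w j⁆ = 0)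
    (b4 : ∀ i, ⁅A, f i⁆ = a i • w i) (b5 : ∀ i, ⁅A, w i⁆ = -(a i) • f i)
    (b6 : ⁅A, B⁆ = 0) (b7 : ∀ i, ⁅B, f i⁆ = 0) (b8 : ∀ i, ⁅B, w i⁆ = 0)
    -- dual basis 1-forms
    (α β : g →ₗ[ℝ] ℝ) (φf φw : Fin m → g →ₗ[ℝ] ℝ)
    (d1 : α A = 1) (d2 : α B = 0) (d3 : ∀ i, α (f i) = 0) (d4 : ∀ i, α (w i) = 0)
    (d5 : β A = 0) (d6 : β B = 1) (d7 : ∀ i, β (f i) = 0) (d8 : ∀ i, β (w i) = 0)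
    (d9 : ∀ i j, φf i (f j) = if i = j then 1 else 0)
    (d10 : ∀ i j, φf i (w j) = 0) (d11 : ∀ i, φf i A = 0) (d12 : ∀ i, φf i B = 0)
    (d13 : ∀ i j, φw i (w j) = if i = j then 1 else 0)
    (d14 : ∀ i j, φw i (f j) = 0) (d15 : ∀ i, φw i A = 0) (d16 : ∀ i, φw i B = 0) :
    (∀ v : Fin (m + 2) → g, ceDiff (etaForm α β φf φw) v = 0) ↔
      ∑ j, a j = 0 := by
  have hS : ∀ P : g → Prop, P A → P B → (∀ i, P (f i)) → (∀ i, P (w i)) →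
      ∀ x ∈ Set.range (Sum.elim ![A, B] (Sum.elim f w)), P x := by
    rintro P hA hB hf hw _ ⟨(i | i | i), rfl⟩
    · fin_cases i
      · exact hA
      · exact hB
    · exact hf i
    · exact hw i
  have c1 : ∀ i j, ⁅w i, f j⁆ = if j = i then -B else 0 := by
    intro i j; rw [← lie_skew, b1]; split_ifs <;> simp
  have c4 : ∀ i, ⁅f i, A⁆ = -(a i • w i) := by intro i; rw [← lie_skew, b4]
  have c5 : ∀ i, ⁅w i, A⁆ = a i • f i := by intro i; rw [← lie_skew, b5]; simp
  have c6 : ⁅B, A⁆ = 0 := by rw [← lie_skew, b6]; simp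
  have c7 : ∀ i, ⁅f i, B⁆ = 0 := by intro i; rw [← lie_skew, b7]; simp
  have c8 : ∀ i, ⁅w i, B⁆ = 0 := by intro i; rw [← lie_skew, b8]; simp
  have k1 : ∀ x y : g, α ⁅x, y⁆ = 0 := by
    refine aux_bil _ hspan (fun x y => α ⁅x, y⁆) ?_ ?_ ?_ ?_
    · intro x y; rw [← lie_skew, map_neg]
    · intro x x' y; simp
    · intro c x y; simp
    · apply hS <;> (try intro i) <;> apply hS <;> (try intro j) <;>
        simp only [b1, b2, b3, b4, b5, b6, b7, b8, c1, c4, c5, c6, c7, c8, lie_self, apply_ite α] <;>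
        simp [d1, d2, d3, d4]
  have k2 : ∀ x y : g, β ⁅x, y⁆ - ∑ k, (φf k x * φw k y - φf k y * φw k x) = 0 := by
    refine aux_bil _ hspan (fun x y => β ⁅x, y⁆ - ∑ k, (φf k x * φw k y - φf k y * φw k x)) ?_ ?_ ?_ ?_
    · intro x y; rw [← lie_skew, map_neg]
      simp only [Finset.sum_sub_distrib]; ring
    · intro x x' y
      simp only [add_lie, map_add, add_mul, mul_add, Finset.sum_sub_distrib, Finset.sum_add_distrib]
      ring
    · intro c x y
      simp only [smul_lie, map_smul, smul_eq_mul, mul_sub, Finset.mul_sum]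
      congr 1
      refine Finset.sum_congr rfl fun k _ => ?_
      ring
    · apply hS <;> (try intro i) <;> apply hS <;> (try intro j) <;>
        simp only [b1, b2, b3, b4, b5, b6, b7, b8, c1, c4, c5, c6, c7, c8, lie_self, apply_ite β] <;>
        simp [d5, d6, d7, d8, d9, d10, d11, d12, d13, d14, d15, d16] <;>
        (split_ifs <;> simp_all)
  have k3 : ∀ (l : Fin m) (x y : g), φf l ⁅x, y⁆ + a l * (α x * φw l y - α y * φw l x) = 0 := by
    intro l
    refine aux_bil _ hspan (fun x y => φf l ⁅x, y⁆ + a l * (α x * φw l y - α y * φw l x)) ?_ ?_ ?_ ?_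
    · intro x y; rw [← lie_skew, map_neg]; ring
    · intro x x' y
      simp only [add_lie, map_add]
      ring
    · intro c x y
      simp only [smul_lie, map_smul, smul_eq_mul]
      ring
    · apply hS <;> (try intro i) <;> apply hS <;> (try intro j) <;>
        simp only [b1, b2, b3, b4, b5, b6, b7, b8, c1, c4, c5, c6, c7, c8, lie_self, apply_ite (φf l)] <;>
        simp [d1, d2, d3, d4, d9, d10, d11, d12, d13, d14, d15, d16] <;>
        (split_ifs <;> simp_all)
  have k4 : ∀ (l : Fin m) (x y : g), φw l ⁅x, y⁆ - a l * (α x * φf l y - α y * φf l x) = 0 := by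
    intro l
    refine aux_bil _ hspan (fun x y => φw l ⁅x, y⁆ - a l * (α x * φf l y - α y * φf l x)) ?_ ?_ ?_ ?_
    · intro x y; rw [← lie_skew, map_neg]; ring
    · intro x x' y
      simp only [add_lie, map_add]
      ring
    · intro c x y
      simp only [smul_lie, map_smul, smul_eq_mul]
      ring
    · apply hS <;> (try intro i) <;> apply hS <;> (try intro j) <;>
        simp only [b1, b2, b3, b4, b5, b6, b7, b8, c1, c4, c5, c6, c7, c8, lie_self, apply_ite (φw l)] <;>
        simp [d1, d2, d3, d4, d9, d10, d11, d12, d13, d14, d15, d16] <;>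
        (split_ifs <;> simp_all)
  let θ : g → Fin (m + 1) → ℂ := fun x i =>
    Fin.cases ((α x : ℂ) + Complex.I * (β x : ℂ))
      (fun j => (φf j x : ℂ) + Complex.I * (φw j x : ℂ)) i
  let R : g → Matrix (Fin (m + 1)) (Fin (m + 1)) ℂ := fun y => Matrix.of fun i k =>
    Fin.cases (Fin.cases 0 (fun k' => -(1 / 2) * ((φf k' y : ℂ) - Complex.I * (φw k' y : ℂ))) k)
      (fun j => if k = j.succ then -Complex.I * (a j : ℂ) * (α y : ℂ) else 0) i
  have hθ : ∀ x y : g, θ ⁅x, y⁆ = (R y).mulVec (θ x) - (R x).mulVec (θ y) := by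
    intro x y
    ext i
    refine Fin.cases ?_ (fun j => ?_) i
    · simp only [θ, R, Matrix.mulVec, dotProduct, Fin.sum_univ_succ, Fin.cases_zero, Fin.cases_succ,
        Matrix.of_apply, Pi.sub_apply, zero_mul, zero_add]
      rw [k1, sub_eq_zero.1 (k2 x y), ← Finset.sum_sub_distrib]
      push_cast
      rw [zero_add, Finset.mul_sum]
      refine Finset.sum_congr rfl fun k _ => ?_
      ring
    · simp only [θ, R, Matrix.mulVec, dotProduct, Fin.cases_succ,
        Matrix.of_apply, Pi.sub_apply, ite_mul, zero_mul, Finset.sum_ite_eq', Finset.sum_ite_eq,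
        Finset.mem_univ, if_true]
      rw [eq_neg_of_add_eq_zero_left (k3 j x y), sub_eq_zero.1 (k4 j x y)]
      push_cast
      linear_combination (-(a j : ℂ) * (α x * φw j y - α y * φw j x)) * Complex.I_mul_I
  have htr : ∀ y, (R y).trace = -Complex.I * (α y : ℂ) * ((∑ j, a j : ℝ) : ℂ) := by
    intro y
    simp only [Matrix.trace, Matrix.diag, Fin.sum_univ_succ, R, Matrix.of_apply, Fin.cases_zero,
      Fin.cases_succ, if_true, zero_add]
    push_cast
    rw [Finset.mul_sum]
    refine Finset.sum_congr rfl fun k _ => ?_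
    ring
  have hmain : ∀ v : Fin (m + 2) → g, ceDiff (etaForm α β φf φw) v = _ :=
    fun v => aux_main θ R hθ v
  constructor
  · intro h
    have h0 := h (Fin.cons A (Fin.cons B f))
    rw [hmain, Fin.sum_univ_succ] at h0
    have hz : ∀ i : Fin (m + 1), α ((Fin.cons B f : Fin (m + 1) → g) i) = 0 := by
      intro i
      refine Fin.cases ?_ (fun j => ?_) i
      · simpa using d2
      · simpa using d3 j
    simp only [htr, Fin.cons_succ, Fin.cons_zero, hz, d1] at h0
    have hdet : Matrix.det (Matrix.of fun i l : Fin (m + 1) =>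
        θ ((Fin.cons A (Fin.cons B f) : Fin (m + 2) → g) ((0 : Fin (m + 2)).succAbove l)) i) = Complex.I := by
      have : (Matrix.of fun i l : Fin (m + 1) =>
        θ ((Fin.cons A (Fin.cons B f) : Fin (m + 2) → g) ((0 : Fin (m + 2)).succAbove l)) i) =
        Matrix.diagonal (Fin.cons Complex.I (fun _ => 1)) := by
        ext s t
        refine Fin.cases ?_ (fun s => ?_) s <;> refine Fin.cases ?_ (fun t => ?_) t <;>
          simp [θ, Matrix.diagonal_apply, d2, d3, d6, d7, d9, d12, d14, d16, (Fin.succ_ne_zero _).symm]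
        split_ifs <;> simp
      rw [this, Matrix.det_diagonal, Fin.prod_univ_succ]
      simp
    rw [hdet] at h0
    have h1 : ((∑ j, a j : ℝ) : ℂ) = 0 := by
      simp only [Complex.ofReal_zero, Complex.ofReal_one, mul_zero, zero_mul, Finset.sum_const_zero,
        add_zero, Fin.val_zero, pow_zero, one_mul, mul_one] at h0
      linear_combination h0 + ((∑ j, a j : ℝ) : ℂ) * Complex.I_mul_I
    exact_mod_cast h1
  · intro h v
    rw [hmain]
    simp [htr, h]
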